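/- Isoperimetric inequality for the variational infinity Bernoulli constant: if Ω ⊂ ℝⁿ is a nonempty open bounded convex set and Ω* is a ball with the same volume as Ω, then Λ_∞(Ω) ≥ Λ_∞(Ω*), with equality if and only if Ω is a ball. Here Λ_∞(Ω) := 1/max_{r ∈ [0, R_Ω]}(r·|Ω_r|). -/

import Mathlib

/-!
# The isoperimetric inequality for the variational infinity Bernoulli constant

Let `R` be the radius of the ball with the volume of `Ω`. Every ball of radius `r` about a point of
`Ω_r` lies in `Ω`, so `Ω_r + B_r ⊆ Ω` and the Brunn–Minkowski inequality gives
`|Ω_r| ≤ |B_{R - r}|` (`volume_le_volume_ball_sub`). For the ball itself this is an equality, hence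
`max_r r |Ω_r| ≤ max_r r |B_{R - r}|`, which is the inequality between the constants.

If the two maxima agree, upper semicontinuity of the volume of the closed inner parallel sets yields
a radius `0 < r < R` whose closed inner parallel set `A` has the volume of `B_{R - r}` exactly
(`exists_sSup_parallelValues_le`), so `A + B_r ⊆ Ω` is an equality case of Brunn–Minkowski. Then `A`
agrees almost everywhere with a ball of radius `R - r` (`exists_volume_diff_closedBall`); hence `Ω`
contains a ball of radius `R`, and being open and of the same volume it equals that ball.

Brunn–Minkowski is obtained from the Prékopa–Leindler inequality, which is proved on the line by
comparing superlevel sets and in `ℝⁿ` by induction on products. The equality case is proved by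
perturbation. For `K`, `B`, `M` of equal volume with `a K + b B ⊆ M` and functions with
`γ (a x + b y) ≥ a α x + b β y`, Prékopa–Leindler applied to `exp (t α)`, `exp (t β)`, `exp (t γ)`
gives `∫_M γ ≥ a ∫_K α + b ∫_B β` to first order in `t`, and a variance inequality to second order
(`integral_combo_le`, `integral_sq_combo_le`). For linear functions and centred sets
the latter reads `a ∫_K ‖x‖² + b ∫_B ‖x‖² ≤ ∫_M ‖x‖²`. The function `-‖x‖²` is concave with slack
`a b ‖x - y‖²` (`norm_sq_combo`), so it may be perturbed on `K` and `B` by multiples of the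
Lipschitz function `(‖x‖ - 1)⁺`, which vanishes on the unit ball `B`, at a cost quadratic in the
size of the perturbation. The first-order inequality then gives `∫_K (‖x‖ - 1)⁺ ≤ 0`, that is,
`K ⊆ closedBall 0 1` almost everywhere (`volume_diff_closedBall_centred`).
-/

open MeasureTheory Metric Set Filter

noncomputable section

/-- The inner parallel set `Ω_r = {x ∈ Ω : dist(x, ∂Ω) > r}`. -/
def innerParallel {n : ℕ} (Ω : Set (EuclideanSpace ℝ (Fin n))) (r : ℝ) :
    Set (EuclideanSpace ℝ (Fin n)) :=
  {x ∈ Ω | r < infDist x (frontier Ω)}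

/-- The inradius `R_Ω = sup_{x ∈ Ω} dist(x, ∂Ω)`. -/
def inradius {n : ℕ} (Ω : Set (EuclideanSpace ℝ (Fin n))) : ℝ :=
  sSup ((fun x => infDist x (frontier Ω)) '' Ω)

/-- The perimeter of a set: the `(n-1)`-dimensional Hausdorff measure of its boundary. -/
def perim {n : ℕ} (A : Set (EuclideanSpace ℝ (Fin n))) : ℝ :=
  (μH[(n : ℝ) - 1] (frontier A)).toReal

/-- The variational infinity Bernoulli constant, via its geometric characterization. -/
def LamInf {n : ℕ} (Ω : Set (EuclideanSpace ℝ (Fin n))) : ℝ :=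
  (sSup ((fun r => r * (volume (innerParallel Ω r)).toReal) '' Set.Icc 0 (inradius Ω)))⁻¹


/-! ### The Prékopa–Leindler inequality -/

lemma volume_add_le_of_isCompact {A B C : Set ℝ} (hA : IsCompact A) (hB : IsCompact B)
    (hAne : A.Nonempty) (hBne : B.Nonempty) (h : ∀ x ∈ A, ∀ y ∈ B, x + y ∈ C) :
    volume A + volume B ≤ volume C := by
  obtain ⟨a, haA, ha⟩ := hA.exists_isGreatest hAne
  obtain ⟨b, hbB, hb⟩ := hB.exists_isLeast hBne
  -- the translates `A + min B` and `max A + B` lie in `C` and share only the point `max A + min B`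
  have h1 : (fun x => x + b) '' A ∪ (fun y => a + y) '' B ⊆ C := by
    rintro _ (⟨x, hx, rfl⟩ | ⟨y, hy, rfl⟩)
    · exact h x hx b hbB
    · exact h a haA y hy
  have hdisj : AEDisjoint volume ((fun x => x + b) '' A) ((fun y => a + y) '' B) := by
    refine measure_mono_null (t := {a + b}) ?_ (by simp)
    rintro z ⟨⟨x, hx, rfl⟩, ⟨y, hy, hxy⟩⟩
    have := ha hx
    have := hb hy
    simp only [mem_singleton_iff] at *
    linarith
  have hm : NullMeasurableSet ((fun y => a + y) '' B) volume :=
    (hB.image (by fun_prop)).measurableSet.nullMeasurableSet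
  calc volume A + volume B
      = volume ((fun x => x + b) '' A) + volume ((fun y => a + y) '' B) := by
        rw [image_add_right, image_add_left, measure_preimage_add_right, measure_preimage_add]
    _ = _ := (measure_union₀ hm hdisj).symm
    _ ≤ _ := measure_mono h1

/-- The one-dimensional Brunn–Minkowski inequality. -/
lemma volume_combo_le {A B C : Set ℝ} (hA : MeasurableSet A) (hB : MeasurableSet B)
    (hAne : A.Nonempty) (hBne : B.Nonempty) {a b : ℝ} (ha : 0 < a) (hb : 0 < b)
    (h : ∀ x ∈ A, ∀ y ∈ B, a * x + b * y ∈ C) :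
    ENNReal.ofReal a * volume A + ENNReal.ofReal b * volume B ≤ volume C := by
  rw [hA.measure_eq_iSup_isCompact, hB.measure_eq_iSup_isCompact]
  simp only [ENNReal.mul_iSup, iSup_and']
  refine ENNReal.biSup_add_biSup_le' (p := fun K => K ⊆ A ∧ IsCompact K)
    (q := fun K => K ⊆ B ∧ IsCompact K) ⟨∅, by simp⟩ ⟨∅, by simp⟩ ?_
  rintro K ⟨hKA, hK⟩ L ⟨hLB, hL⟩
  obtain ⟨x₀, hx₀⟩ := hAne
  obtain ⟨y₀, hy₀⟩ := hBne
  have hK' : IsCompact ((fun x => a * x) '' (insert x₀ K)) :=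
    (hK.insert x₀).image (by fun_prop)
  have hL' : IsCompact ((fun x => b * x) '' (insert y₀ L)) :=
    (hL.insert y₀).image (by fun_prop)
  have key := volume_add_le_of_isCompact (C := C) hK' hL'
    ((insert_nonempty _ _).image _) ((insert_nonempty _ _).image _) (by
      rintro _ ⟨x, hx, rfl⟩ _ ⟨y, hy, rfl⟩
      refine h x ?_ y ?_
      · rcases hx with rfl | hx
        exacts [hx₀, hKA hx]
      · rcases hy with rfl | hy
        exacts [hy₀, hLB hy])
  have e : ∀ (c : ℝ), 0 < c → ∀ S : Set ℝ, volume ((fun x => c * x) '' S)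
      = ENNReal.ofReal c * volume S := by
    intro c hc S
    have := Measure.addHaar_smul (volume : Measure ℝ) c S
    simpa [← image_smul, abs_of_pos hc] using this
  rw [e a ha, e b hb] at key
  refine le_trans ?_ key
  gcongr <;> exact subset_insert _ _

lemma ennreal_geom_mean_le {a b : ℝ} (ha : 0 < a) (hb : 0 < b) (hab : a + b = 1)
    (x y : ENNReal) :
    x ^ a * y ^ b ≤ ENNReal.ofReal a * x + ENNReal.ofReal b * y := by
  by_cases hx : x = ⊤
  · simp [hx, ENNReal.mul_top, ha]
  by_cases hy : y = ⊤
  · simp [hy, ENNReal.mul_top, hb]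
  lift x to NNReal using hx
  lift y to NNReal using hy
  have := NNReal.geom_mean_le_arith_mean2_weighted a.toNNReal b.toNNReal x y (by
    rw [← Real.toNNReal_add ha.le hb.le, hab, Real.toNNReal_one])
  rw [Real.coe_toNNReal _ ha.le, Real.coe_toNNReal _ hb.le] at this
  rw [← ENNReal.coe_rpow_of_nonneg _ ha.le, ← ENNReal.coe_rpow_of_nonneg _ hb.le]
  simp only [ENNReal.ofReal]
  exact_mod_cast this

/-- The layer-cake formula for a function with values in `[0, 1]`: only levels in `(0, 1)`
contribute. -/
lemma lintegral_eq_levels {f : ℝ → ENNReal} (hf : Measurable f) (h1 : ∀ x, f x ≤ 1) :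
    ∫⁻ x, f x = ∫⁻ t in Ioo (0 : ℝ) 1, volume {x | ENNReal.ofReal t < f x} := by
  have hfin : ∀ x, f x ≠ ⊤ := fun x => ((h1 x).trans_lt ENNReal.one_lt_top).ne
  have e1 : ∫⁻ x, f x = ∫⁻ x, ENNReal.ofReal ((f x).toReal) := by
    simp [ENNReal.ofReal_toReal, hfin]
  rw [e1, lintegral_eq_lintegral_meas_lt _ (Eventually.of_forall fun x => ENNReal.toReal_nonneg)
    hf.ennreal_toReal.aemeasurable]
  rw [← lintegral_indicator measurableSet_Ioi, ← lintegral_indicator measurableSet_Ioo]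
  congr 1
  funext t
  by_cases ht0 : 0 < t
  · by_cases ht1 : t < 1
    · rw [indicator_of_mem (show t ∈ Ioi (0 : ℝ) from ht0),
        indicator_of_mem (show t ∈ Ioo (0 : ℝ) 1 from ⟨ht0, ht1⟩)]
      simp [ENNReal.ofReal_lt_iff_lt_toReal ht0.le (hfin _)]
    · rw [indicator_of_mem (show t ∈ Ioi (0 : ℝ) from ht0),
        indicator_of_notMem (fun h : t ∈ Ioo (0 : ℝ) 1 => ht1 h.2)]
      have : {x | t < (f x).toReal} = ∅ := by
        refine eq_empty_of_forall_notMem fun x hx => ?_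
        have h2 : (f x).toReal ≤ 1 := by
          simpa using ENNReal.toReal_mono ENNReal.one_ne_top (h1 x)
        exact absurd (lt_of_lt_of_le hx h2) ht1
      rw [this, measure_empty]
  · rw [indicator_of_notMem (fun h : t ∈ Ioi (0 : ℝ) => ht0 h),
      indicator_of_notMem (fun h : t ∈ Ioo (0 : ℝ) 1 => ht0 h.1)]

/-- The one-dimensional case for functions of supremum `1`, in additive form. -/
lemma pl_one_normalized {a b : ℝ} (ha : 0 < a) (hb : 0 < b) (hab : a + b = 1)
    {f g h : ℝ → ENNReal} (hf : Measurable f) (hg : Measurable g) (hh : Measurable h)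
    (hf1 : (⨆ x, f x) = 1) (hg1 : (⨆ x, g x) = 1)
    (H : ∀ x y, f x ^ a * g y ^ b ≤ h (a * x + b * y)) :
    ENNReal.ofReal a * (∫⁻ x, f x) + ENNReal.ofReal b * (∫⁻ x, g x) ≤ ∫⁻ x, h x := by
  have hf1' : ∀ x, f x ≤ 1 := fun x => hf1 ▸ le_iSup f x
  have hg1' : ∀ x, g x ≤ 1 := fun x => hg1 ▸ le_iSup g x
  have hmeas : ∀ {f : ℝ → ENNReal}, Measurable fun t : ℝ => volume {x | ENNReal.ofReal t < f x} :=
    fun {f} => Antitone.measurable fun s t hst => measure_mono fun x hx =>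
      (ENNReal.ofReal_le_ofReal hst).trans_lt hx
  calc _ ≤ ∫⁻ x, min (h x) 1 := by
        rw [lintegral_eq_levels hf hf1', lintegral_eq_levels hg hg1',
          lintegral_eq_levels (hh.min measurable_const) (fun x => min_le_right _ _),
          ← lintegral_const_mul _ hmeas, ← lintegral_const_mul _ hmeas,
          ← lintegral_add_left (hmeas.const_mul _)]
        refine setLIntegral_mono' measurableSet_Ioo fun t ht => ?_
        have ht1 : ENNReal.ofReal t < 1 := by simpa using ht.2
        refine volume_combo_le (measurableSet_lt measurable_const hf)
          (measurableSet_lt measurable_const hg) ?_ ?_ ha hb ?_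
        · exact lt_iSup_iff.1 (hf1 ▸ ht1)
        · exact lt_iSup_iff.1 (hg1 ▸ ht1)
        · intro x hx y hy
          refine lt_min (lt_of_lt_of_le ?_ (H x y)) ht1
          calc ENNReal.ofReal t = ENNReal.ofReal t ^ a * ENNReal.ofReal t ^ b := by
                rw [← ENNReal.rpow_add_of_nonneg _ _ ha.le hb.le, hab, ENNReal.rpow_one]
            _ < _ := ENNReal.mul_lt_mul (ENNReal.rpow_lt_rpow hx ha) (ENNReal.rpow_lt_rpow hy hb)
    _ ≤ _ := lintegral_mono fun x => min_le_left _ _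

lemma pl_one_bounded {a b : ℝ} (ha : 0 < a) (hb : 0 < b) (hab : a + b = 1)
    {f g h : ℝ → ENNReal} (hf : Measurable f) (hg : Measurable g) (hh : Measurable h)
    (hf1 : (⨆ x, f x) ≠ ⊤) (hg1 : (⨆ x, g x) ≠ ⊤)
    (H : ∀ x y, f x ^ a * g y ^ b ≤ h (a * x + b * y)) :
    (∫⁻ x, f x) ^ a * (∫⁻ x, g x) ^ b ≤ ∫⁻ x, h x := by
  set s := ⨆ x, f x with hs
  set t := ⨆ x, g x with ht
  by_cases hs0 : s = 0
  · have : ∀ x, f x = 0 := fun x => le_antisymm (hs0 ▸ le_iSup f x) bot_le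
    simp [this, ha]
  by_cases ht0 : t = 0
  · have : ∀ x, g x = 0 := fun x => le_antisymm (ht0 ▸ le_iSup g x) bot_le
    simp [this, hb]
  set c := s ^ a * t ^ b with hc
  have hc0 : c ≠ 0 := by
    simp [hc, hs0, ht0, ha.le, hb.le]
  have hct : c ≠ ⊤ := ENNReal.mul_ne_top (ENNReal.rpow_ne_top_of_nonneg ha.le hf1)
    (ENNReal.rpow_ne_top_of_nonneg hb.le hg1)
  have hcinv : c⁻¹ = (s⁻¹) ^ a * (t⁻¹) ^ b := by
    rw [hc, ENNReal.mul_inv, ENNReal.inv_rpow, ENNReal.inv_rpow]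
    · right; exact ENNReal.rpow_ne_top_of_nonneg hb.le hg1
    · left; exact ENNReal.rpow_ne_top_of_nonneg ha.le hf1
  have key := pl_one_normalized ha hb hab (f := fun x => s⁻¹ * f x) (g := fun x => t⁻¹ * g x)
    (h := fun x => c⁻¹ * h x) (hf.const_mul _) (hg.const_mul _) (hh.const_mul _)
    (by rw [← ENNReal.mul_iSup]; exact ENNReal.inv_mul_cancel hs0 hf1)
    (by rw [← ENNReal.mul_iSup]; exact ENNReal.inv_mul_cancel ht0 hg1)
    (by
      intro x y
      rw [ENNReal.mul_rpow_of_nonneg _ _ ha.le, ENNReal.mul_rpow_of_nonneg _ _ hb.le, hcinv,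
        mul_mul_mul_comm]
      gcongr
      exact H x y)
  rw [lintegral_const_mul _ hf, lintegral_const_mul _ hg, lintegral_const_mul _ hh] at key
  have key2 := (ennreal_geom_mean_le ha hb hab _ _).trans key
  rw [ENNReal.mul_rpow_of_nonneg _ _ ha.le, ENNReal.mul_rpow_of_nonneg _ _ hb.le,
    mul_mul_mul_comm, ← hcinv] at key2
  exact (ENNReal.mul_le_mul_iff_right (ENNReal.inv_ne_zero.2 hct) (ENNReal.inv_ne_top.2 hc0)).1 key2

/-- The Prékopa–Leindler inequality, as a property of a measured vector space. -/
def PrekopaLeindler (E : Type*) [AddCommGroup E] [Module ℝ E] [MeasureSpace E] : Prop :=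
  ∀ ⦃a b : ℝ⦄, 0 < a → 0 < b → a + b = 1 → ∀ ⦃f g h : E → ENNReal⦄,
    Measurable f → Measurable g → Measurable h →
    (∀ x y, f x ^ a * g y ^ b ≤ h (a • x + b • y)) →
    (∫⁻ x, f x) ^ a * (∫⁻ x, g x) ^ b ≤ ∫⁻ x, h x

lemma tendsto_lintegral_trunc {f : ℝ → ENNReal} (hf : Measurable f) :
    Tendsto (fun N : ℕ => ∫⁻ x, min (f x) N) atTop (nhds (∫⁻ x, f x)) := by
  refine lintegral_tendsto_of_tendsto_of_monotone
    (fun N => (hf.min measurable_const).aemeasurable) (Eventually.of_forall fun x => ?_)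
    (Eventually.of_forall fun x => ?_)
  · intro M N hMN
    simp only
    gcongr
  · have := (tendsto_const_nhds (x := f x)).min ENNReal.tendsto_nat_nhds_top
    simpa using this

lemma prekopaLeindler_real : PrekopaLeindler ℝ := by
  intro a b ha hb hab f g h hf hg hh H
  by_cases hf0 : ∫⁻ x, f x = 0
  · simp [hf0, ha]
  by_cases hg0 : ∫⁻ x, g x = 0
  · simp [hg0, hb]
  have lim := ENNReal.Tendsto.mul
    ((ENNReal.continuous_rpow_const (y := a)).continuousAt.tendsto.comp (tendsto_lintegral_trunc hf))
    (by left; simp [hf0, ha.not_gt])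
    ((ENNReal.continuous_rpow_const (y := b)).continuousAt.tendsto.comp (tendsto_lintegral_trunc hg))
    (by left; simp [hg0, hb.not_gt])
  refine le_of_tendsto lim (Eventually.of_forall fun N => ?_)
  have hlt : ∀ f : ℝ → ENNReal, (⨆ x, min (f x) (N : ENNReal)) ≠ ⊤ := fun f =>
    ((iSup_le fun x => min_le_right _ _).trans_lt (ENNReal.natCast_lt_top N)).ne
  refine pl_one_bounded ha hb hab (hf.min measurable_const) (hg.min measurable_const) hh
    (hlt f) (hlt g) fun x y => le_trans ?_ (H x y)
  gcongr <;> exact min_le_left _ _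

lemma PrekopaLeindler.prod {E F : Type*} [AddCommGroup E] [Module ℝ E] [MeasureSpace E]
    [AddCommGroup F] [Module ℝ F] [MeasureSpace F]
    [SFinite (volume : Measure F)]
    (hE : PrekopaLeindler E) (hF : PrekopaLeindler F) : PrekopaLeindler (E × F) := by
  intro a b ha hb hab f g h hf hg hh H
  rw [Measure.volume_eq_prod, lintegral_prod _ hf.aemeasurable, lintegral_prod _ hg.aemeasurable,
    lintegral_prod _ hh.aemeasurable]
  refine hE ha hb hab hf.lintegral_prod_right' hg.lintegral_prod_right' hh.lintegral_prod_right'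
    fun x y => ?_
  exact hF ha hb hab (hf.comp measurable_prodMk_left) (hg.comp measurable_prodMk_left)
    (hh.comp measurable_prodMk_left) fun u v => H (x, u) (y, v)

lemma PrekopaLeindler.of_measurableEquiv {E F : Type*} [AddCommGroup E] [Module ℝ E]
    [MeasureSpace E] [AddCommGroup F] [Module ℝ F] [MeasureSpace F]
    (hE : PrekopaLeindler E) (e : E ≃ᵐ F) (he : MeasurePreserving e)
    (hlin : ∀ (a b : ℝ) x y, e (a • x + b • y) = a • e x + b • e y) : PrekopaLeindler F := by
  intro a b ha hb hab f g h hf hg hh H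
  rw [← he.lintegral_comp hf, ← he.lintegral_comp hg, ← he.lintegral_comp hh]
  refine hE ha hb hab (hf.comp e.measurable) (hg.comp e.measurable) (hh.comp e.measurable)
    fun x y => ?_
  simpa [hlin] using H (e x) (e y)

lemma prekopaLeindler_pi (n : ℕ) : PrekopaLeindler (Fin n → ℝ) := by
  induction n with
  | zero =>
    intro a b ha hb hab f g h hf hg hh H
    rw [volume_pi, Measure.pi_of_empty]
    rw [lintegral_dirac, lintegral_dirac, lintegral_dirac]
    convert H _ _
  | succ n ih =>
    refine (prekopaLeindler_real.prod ih).of_measurableEquiv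
      (MeasurableEquiv.piFinSuccAbove (fun _ => ℝ) 0).symm
      ((volume_preserving_piFinSuccAbove (fun _ => ℝ) 0).symm _) fun a b x y => ?_
    funext i
    refine Fin.cases ?_ (fun j => ?_) i <;> simp [MeasurableEquiv.piFinSuccAbove]

theorem prekopaLeindler_euclidean (n : ℕ) : PrekopaLeindler (EuclideanSpace ℝ (Fin n)) :=
  (prekopaLeindler_pi n).of_measurableEquiv (MeasurableEquiv.toLp 2 (Fin n → ℝ))
    (EuclideanSpace.volume_preserving_symm_measurableEquiv_toLp (Fin n)).symm fun _ _ _ _ => rfl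

/-! ### Expansions of the Prékopa–Leindler inequality -/

lemma le_of_forall_small {X Y C t₀ : ℝ} (ht₀ : 0 < t₀)
    (h : ∀ t, 0 < t → t ≤ t₀ → X ≤ Y + C * t) : X ≤ Y := by
  have lim : Tendsto (fun t : ℝ => Y + C * t) (nhdsWithin 0 (Ioi 0)) (nhds (Y + C * 0)) :=
    (Continuous.tendsto (by fun_prop) 0).mono_left nhdsWithin_le_nhds
  rw [mul_zero, add_zero] at lim
  refine ge_of_tendsto lim ?_
  filter_upwards [Ioc_mem_nhdsGT ht₀] with t ht using h t ht.1 ht.2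

section Expansions

variable {n : ℕ} {K B M : Set (EuclideanSpace ℝ (Fin n))} {a b : ℝ}

lemma integrableOn_of_isBounded {φ : EuclideanSpace ℝ (Fin n) → ℝ} (hφ : Continuous φ)
    (hK : Bornology.IsBounded K) : IntegrableOn φ K := by
  have h := hK.isCompact_closure
  exact (hφ.continuousOn.integrableOn_compact h).mono_set subset_closure

lemma exists_bound_of_isBounded {φ : EuclideanSpace ℝ (Fin n) → ℝ} (hφ : Continuous φ)
    (hK : Bornology.IsBounded K) : ∃ D, 1 ≤ D ∧ ∀ x ∈ K, |φ x| ≤ D := by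
  obtain ⟨C, hC⟩ := hK.isCompact_closure.exists_bound_of_continuousOn hφ.continuousOn
  exact ⟨max C 1, le_max_right _ _, fun x hx => (hC x (subset_closure hx)).trans (le_max_left _ _)⟩

lemma lintegral_exp_combo (ha : 0 < a) (hb : 0 < b) (hab : a + b = 1)
    (hK : MeasurableSet K) (hB : MeasurableSet B) (hM : MeasurableSet M)
    (hsub : ∀ x ∈ K, ∀ y ∈ B, a • x + b • y ∈ M)
    {α β γ : EuclideanSpace ℝ (Fin n) → ℝ} (hα : Measurable α) (hβ : Measurable β)
    (hγ : Measurable γ)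
    (H : ∀ x ∈ K, ∀ y ∈ B, a * α x + b * β y ≤ γ (a • x + b • y)) :
    (∫⁻ x in K, ENNReal.ofReal (Real.exp (α x))) ^ a *
      (∫⁻ x in B, ENNReal.ofReal (Real.exp (β x))) ^ b ≤
      ∫⁻ x in M, ENNReal.ofReal (Real.exp (γ x)) := by
  rw [← lintegral_indicator hK, ← lintegral_indicator hB, ← lintegral_indicator hM]
  refine prekopaLeindler_euclidean n ha hb hab ?_ ?_ ?_ fun x y => ?_
  · exact (hα.exp.ennreal_ofReal).indicator hK
  · exact (hβ.exp.ennreal_ofReal).indicator hB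
  · exact (hγ.exp.ennreal_ofReal).indicator hM
  · by_cases hx : x ∈ K
    · by_cases hy : y ∈ B
      · rw [indicator_of_mem hx, indicator_of_mem hy, indicator_of_mem (hsub x hx y hy),
          ENNReal.ofReal_rpow_of_pos (Real.exp_pos _), ENNReal.ofReal_rpow_of_pos (Real.exp_pos _),
          ← ENNReal.ofReal_mul (by positivity), ← Real.exp_mul, ← Real.exp_mul, ← Real.exp_add]
        refine ENNReal.ofReal_le_ofReal (Real.exp_le_exp.2 ?_)
        linarith [H x hx y hy]
      · simp [indicator_of_notMem hy, hb]
    · simp [indicator_of_notMem hx, ha]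

/-- The multiplicative Brunn–Minkowski inequality. -/
lemma volume_rpow_mul_le (ha : 0 < a) (hb : 0 < b) (hab : a + b = 1)
    (hK : MeasurableSet K) (hB : MeasurableSet B) (hM : MeasurableSet M)
    (hsub : ∀ x ∈ K, ∀ y ∈ B, a • x + b • y ∈ M) :
    volume K ^ a * volume B ^ b ≤ volume M := by
  simpa using lintegral_exp_combo ha hb hab hK hB hM hsub (α := fun _ => 0) (β := fun _ => 0)
    (γ := fun _ => 0) measurable_const measurable_const measurable_const (by simp)

lemma setIntegral_exp_pos {φ : EuclideanSpace ℝ (Fin n) → ℝ} (hφ : Continuous φ)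
    (hK : Bornology.IsBounded K) (hpos : 0 < volume.real K) :
    0 < ∫ x in K, Real.exp (φ x) := by
  have hint := integrableOn_of_isBounded hφ.rexp hK
  have : NeZero (volume.restrict K) := ⟨fun h => by
    rw [Measure.restrict_eq_zero] at h
    simp [Measure.real, h] at hpos⟩
  exact integral_exp_pos hint

lemma log_integral_exp_combo (ha : 0 < a) (hb : 0 < b) (hab : a + b = 1)
    (hK : MeasurableSet K) (hB : MeasurableSet B) (hM : MeasurableSet M)
    (hKb : Bornology.IsBounded K) (hBb : Bornology.IsBounded B) (hMb : Bornology.IsBounded M)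
    (hK0 : 0 < volume.real K) (hB0 : 0 < volume.real B)
    (hsub : ∀ x ∈ K, ∀ y ∈ B, a • x + b • y ∈ M)
    {α β γ : EuclideanSpace ℝ (Fin n) → ℝ} (hα : Continuous α) (hβ : Continuous β)
    (hγ : Continuous γ)
    (H : ∀ x ∈ K, ∀ y ∈ B, a * α x + b * β y ≤ γ (a • x + b • y)) :
    a * Real.log (∫ x in K, Real.exp (α x)) + b * Real.log (∫ x in B, Real.exp (β x)) ≤
      Real.log (∫ x in M, Real.exp (γ x)) := by
  have key := lintegral_exp_combo ha hb hab hK hB hM hsub hα.measurable hβ.measurable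
    hγ.measurable H
  have p1 := setIntegral_exp_pos hα hKb hK0
  have p2 := setIntegral_exp_pos hβ hBb hB0
  have e : ∀ {φ : EuclideanSpace ℝ (Fin n) → ℝ} {S : Set (EuclideanSpace ℝ (Fin n))},
      Continuous φ → Bornology.IsBounded S →
      ∫⁻ x in S, ENNReal.ofReal (Real.exp (φ x)) = ENNReal.ofReal (∫ x in S, Real.exp (φ x)) :=
    fun hφ hS => (ofReal_integral_eq_lintegral_ofReal (integrableOn_of_isBounded hφ.rexp hS)
      (Eventually.of_forall fun x => (Real.exp_pos _).le)).symm
  rw [e hα hKb, e hβ hBb, e hγ hMb, ENNReal.ofReal_rpow_of_pos p1, ENNReal.ofReal_rpow_of_pos p2,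
    ← ENNReal.ofReal_mul (by positivity),
    ENNReal.ofReal_le_ofReal_iff (integral_nonneg fun x => (Real.exp_pos _).le)] at key
  have := Real.log_le_log (by positivity) key
  rwa [Real.log_mul (by positivity) (by positivity), Real.log_rpow p1, Real.log_rpow p2] at this

/-- First-order consequence of Prékopa–Leindler: in the equality case of Brunn–Minkowski, the
dual form of the existence of a coupling of `K` and `B` whose combination `a x + b y` is uniform
on `M`. -/
lemma integral_combo_le (ha : 0 < a) (hb : 0 < b) (hab : a + b = 1)
    (hK : MeasurableSet K) (hB : MeasurableSet B) (hM : MeasurableSet M)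
    (hKb : Bornology.IsBounded K) (hBb : Bornology.IsBounded B) (hMb : Bornology.IsBounded M)
    {V : ℝ} (hV : 0 < V) (hKV : volume.real K = V) (hBV : volume.real B = V)
    (hMV : volume.real M = V)
    (hsub : ∀ x ∈ K, ∀ y ∈ B, a • x + b • y ∈ M)
    {α β γ : EuclideanSpace ℝ (Fin n) → ℝ} (hα : Continuous α) (hβ : Continuous β)
    (hγ : Continuous γ)
    (H : ∀ x ∈ K, ∀ y ∈ B, a * α x + b * β y ≤ γ (a • x + b • y)) :
    a * (∫ x in K, α x) + b * (∫ x in B, β x) ≤ ∫ x in M, γ x := by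
  obtain ⟨D, hD1, hD⟩ := exists_bound_of_isBounded hγ hMb
  -- Jensen's inequality for the exponential
  have jensen : ∀ (t : ℝ) {φ : EuclideanSpace ℝ (Fin n) → ℝ} {S : Set (EuclideanSpace ℝ (Fin n))},
      Continuous φ → MeasurableSet S → Bornology.IsBounded S → volume.real S = V →
      Real.log V + t * ((∫ x in S, φ x) / V) ≤ Real.log (∫ x in S, Real.exp (t * φ x)) := by
    intro t φ S hφ hS hSb hSV
    set m := (∫ x in S, φ x) / V with hm
    have hle : V * Real.exp (t * m) ≤ ∫ x in S, Real.exp (t * φ x) := by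
      calc V * Real.exp (t * m)
          = ∫ x in S, Real.exp (t * m) * (1 + t * (φ x - m)) := by
            rw [integral_const_mul, integral_add (integrableOn_of_isBounded (by fun_prop) hSb) (integrableOn_of_isBounded
                (by fun_prop) hSb), integral_const_mul, integral_sub
                (integrableOn_of_isBounded hφ hSb) (integrableOn_of_isBounded (by fun_prop) hSb)]
            simp only [setIntegral_const, hSV, smul_eq_mul]
            rw [hm]
            field_simp
            ring
        _ ≤ _ := by
            refine setIntegral_mono (integrableOn_of_isBounded (by fun_prop) hSb)
              (integrableOn_of_isBounded (by fun_prop) hSb) fun x => ?_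
            have : t * φ x = t * m + t * (φ x - m) := by ring
            simp only
            rw [this, Real.exp_add]
            gcongr
            linarith [Real.add_one_le_exp (t * (φ x - m))]
    calc _ = Real.log (V * Real.exp (t * m)) := by
          rw [Real.log_mul hV.ne' (Real.exp_pos _).ne', Real.log_exp]
      _ ≤ _ := Real.log_le_log (by positivity) hle
  refine le_of_forall_small (C := D ^ 2 * V) (t₀ := 1 / D) (by positivity) fun t ht0 ht => ?_
  have h1 := log_integral_exp_combo ha hb hab hK hB hM hKb hBb hMb (hKV ▸ hV) (hBV ▸ hV) hsub
    (α := fun x => t * α x) (β := fun x => t * β x) (γ := fun x => t * γ x)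
    (by fun_prop) (by fun_prop) (by fun_prop) (fun x hx y hy => by
      have := mul_le_mul_of_nonneg_left (H x hx y hy) ht0.le
      linarith)
  have h2 := jensen t hα hK hKb hKV
  have h3 := jensen t hβ hB hBb hBV
  have hupper : ∫ x in M, Real.exp (t * γ x) ≤ V + t * (∫ x in M, γ x) + t ^ 2 * D ^ 2 * V := by
    calc _ ≤ ∫ x in M, (1 + t * γ x + t ^ 2 * D ^ 2) := by
          refine setIntegral_mono_on (integrableOn_of_isBounded (by fun_prop) hMb)
            (integrableOn_of_isBounded (by fun_prop) hMb) hM fun x hx => ?_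
          have hd := hD x hx
          have htD : |t * γ x| ≤ t * D := by
            rw [abs_mul, abs_of_pos ht0]; gcongr
          have htD1 : t * D ≤ 1 := by
            rwa [le_div_iff₀ (by positivity)] at ht
          have := (abs_le.1 (Real.abs_exp_sub_one_sub_id_le (htD.trans htD1))).2
          have h4 : (t * γ x) ^ 2 ≤ (t * D) ^ 2 := sq_le_sq' (by linarith [(abs_le.1 htD).1])
            (abs_le.1 htD).2
          linarith [mul_pow t D 2]
      _ = _ := by
          rw [integral_add (integrableOn_of_isBounded (by fun_prop) hMb)
            (integrableOn_of_isBounded (by fun_prop) hMb),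
            integral_add (integrableOn_of_isBounded (by fun_prop) hMb)
            (integrableOn_of_isBounded (by fun_prop) hMb),
            integral_const_mul]
          simp only [setIntegral_const, hMV, smul_eq_mul]
          ring
  have hMpos := setIntegral_exp_pos (φ := fun x => t * γ x) (by fun_prop) hMb (hMV ▸ hV)
  have h5 : Real.log (∫ x in M, Real.exp (t * γ x)) ≤
      Real.log V + (t * (∫ x in M, γ x) + t ^ 2 * D ^ 2 * V) / V := by
    have := Real.log_le_sub_one_of_pos (div_pos hMpos hV)
    rw [Real.log_div hMpos.ne' hV.ne'] at this
    have h6 : (∫ x in M, Real.exp (t * γ x)) / V ≤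
        (V + t * (∫ x in M, γ x) + t ^ 2 * D ^ 2 * V) / V := by gcongr
    have h7 : (V + t * (∫ x in M, γ x) + t ^ 2 * D ^ 2 * V) / V =
        1 + (t * (∫ x in M, γ x) + t ^ 2 * D ^ 2 * V) / V := by field_simp; ring
    linarith
  have h8 : t * ((a * (∫ x in K, α x) + b * (∫ x in B, β x)) / V) ≤
      t * (((∫ x in M, γ x) + D ^ 2 * V * t) / V) := by
    have e1 := mul_le_mul_of_nonneg_left h2 ha.le
    have e2 := mul_le_mul_of_nonneg_left h3 hb.le
    have e3 : a * Real.log V + b * Real.log V = Real.log V := by rw [← add_mul, hab, one_mul]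
    have e4 : t * (((∫ x in M, γ x) + D ^ 2 * V * t) / V) =
      (t * (∫ x in M, γ x) + t ^ 2 * D ^ 2 * V) / V := by ring
    have e5 : t * ((a * (∫ x in K, α x) + b * (∫ x in B, β x)) / V) =
      a * (t * ((∫ x in K, α x) / V)) + b * (t * ((∫ x in B, β x) / V)) := by ring
    rw [e4, e5]
    linarith
  exact (div_le_div_iff_of_pos_right hV).1 (le_of_mul_le_mul_left h8 ht0)

lemma integral_exp_second_order (hKb : Bornology.IsBounded K)
    {V : ℝ} (hKV : volume.real K = V)
    {φ : EuclideanSpace ℝ (Fin n) → ℝ} (hφ : Continuous φ) (hφ0 : ∫ x in K, φ x = 0)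
    {D t : ℝ} (hD : ∀ x ∈ K, |φ x| ≤ D) (ht : 0 < t) (htD : t * D ≤ 1) :
    |(∫ x in K, Real.exp (t * φ x)) - (V + t ^ 2 / 2 * ∫ x in K, φ x ^ 2)| ≤ (t * D) ^ 3 * V := by
  have e : (∫ x in K, Real.exp (t * φ x)) - (V + t ^ 2 / 2 * ∫ x in K, φ x ^ 2) =
      ∫ x in K, (Real.exp (t * φ x) - (1 + t * φ x + t ^ 2 / 2 * φ x ^ 2)) := by
    rw [integral_sub (integrableOn_of_isBounded (by fun_prop) hKb)
      (integrableOn_of_isBounded (by fun_prop) hKb),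
      integral_add (integrableOn_of_isBounded (by fun_prop) hKb)
      (integrableOn_of_isBounded (by fun_prop) hKb),
      integral_add (integrableOn_of_isBounded (by fun_prop) hKb)
      (integrableOn_of_isBounded (by fun_prop) hKb),
      integral_const_mul, integral_const_mul, hφ0]
    simp [hKV]
  rw [e, ← hKV, ← Real.norm_eq_abs]
  refine norm_setIntegral_le_of_norm_le_const hKb.measure_lt_top fun x hx => ?_
  have h1 : |t * φ x| ≤ t * D := by
    rw [abs_mul, abs_of_pos ht]
    exact mul_le_mul_of_nonneg_left (hD x hx) ht.le
  have h2 := Real.exp_bound (h1.trans htD) (n := 3) (by norm_num)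
  simp only [Finset.sum_range_succ, Finset.sum_range_zero, Nat.factorial] at h2
  norm_num [-abs_mul] at h2
  rw [Real.norm_eq_abs]
  have h3 : |t * φ x| ^ 3 ≤ (t * D) ^ 3 := by gcongr
  have h4 : 0 ≤ |t * φ x| ^ 3 := by positivity
  have h5 : Real.exp (t * φ x) - (1 + t * φ x + t ^ 2 / 2 * φ x ^ 2) =
    Real.exp (t * φ x) - (1 + t * φ x + (t * φ x) ^ 2 / 2) := by ring
  rw [h5]
  linarith

/-- Second-order consequence of Prékopa–Leindler applied to exponential tilts: in the equality
case of Brunn–Minkowski, the variance of a centred linear functional is concave. -/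
lemma integral_sq_combo_le (ha : 0 < a) (hb : 0 < b) (hab : a + b = 1)
    (hK : MeasurableSet K) (hB : MeasurableSet B) (hM : MeasurableSet M)
    (hKb : Bornology.IsBounded K) (hBb : Bornology.IsBounded B) (hMb : Bornology.IsBounded M)
    {V : ℝ} (hV : 0 < V) (hKV : volume.real K = V) (hBV : volume.real B = V)
    (hMV : volume.real M = V)
    (hsub : ∀ x ∈ K, ∀ y ∈ B, a • x + b • y ∈ M)
    (ℓ : EuclideanSpace ℝ (Fin n) →L[ℝ] ℝ)
    (hK0 : ∫ x in K, ℓ x = 0) (hB0 : ∫ x in B, ℓ x = 0) (hM0 : ∫ x in M, ℓ x = 0) :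
    a * (∫ x in K, ℓ x ^ 2) + b * (∫ x in B, ℓ x ^ 2) ≤ ∫ x in M, ℓ x ^ 2 := by
  obtain ⟨D, hD1, hD⟩ := exists_bound_of_isBounded ℓ.continuous (hKb.union (hBb.union hMb))
  have hDK : ∀ x ∈ K, |ℓ x| ≤ D := fun x hx => hD x (Or.inl hx)
  have hDB : ∀ x ∈ B, |ℓ x| ≤ D := fun x hx => hD x (Or.inr (Or.inl hx))
  have hDM : ∀ x ∈ M, |ℓ x| ≤ D := fun x hx => hD x (Or.inr (Or.inr hx))
  have hℓ : Continuous ℓ := ℓ.continuous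
  have lower : ∀ {S : Set (EuclideanSpace ℝ (Fin n))} {t : ℝ}, 0 < t → t ≤ 1 / (4 * D ^ 3) →
      MeasurableSet S → Bornology.IsBounded S → volume.real S = V → (∀ x ∈ S, |ℓ x| ≤ D) →
      ∫ x in S, ℓ x = 0 →
      Real.log V + t ^ 2 / 2 * ((∫ x in S, ℓ x ^ 2) / V) - 9 * D ^ 6 * t ^ 3 ≤
        Real.log (∫ x in S, Real.exp (t * ℓ x)) := by
    intro S t ht0 ht hS hSb hSV hSD hS0
    have hD3 : D ≤ D ^ 3 := le_self_pow₀ hD1 (by norm_num)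
    have hD6 : D ^ 3 ≤ D ^ 6 := pow_le_pow_right₀ hD1 (by norm_num)
    have htD3 : t * D ^ 3 ≤ 1 / 4 := by
      rw [le_div_iff₀ (by positivity)] at ht
      linarith
    have htD : t * D ≤ 1 := by nlinarith
    have ht1 : t ≤ 1 := by nlinarith
    have h1 := (abs_le.1 (integral_exp_second_order hSb hSV hℓ hS0 hSD ht0 htD)).1
    set k := (∫ x in S, ℓ x ^ 2) / V with hk
    have hkV : (∫ x in S, ℓ x ^ 2) = k * V := by rw [hk]; field_simp
    have hk0 : 0 ≤ k := div_nonneg (integral_nonneg fun x => sq_nonneg _) hV.le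
    have hk1 : k ≤ D ^ 2 := by
      rw [hk, div_le_iff₀ hV, ← hSV]
      refine (le_abs_self _).trans ?_
      rw [← Real.norm_eq_abs]
      refine norm_setIntegral_le_of_norm_le_const hSb.measure_lt_top fun x hx => ?_
      rw [Real.norm_eq_abs, abs_pow]
      have := hSD x hx
      gcongr
    set u := t ^ 2 / 2 * k - (t * D) ^ 3 with hu
    have hI : V * (1 + u) ≤ ∫ x in S, Real.exp (t * ℓ x) := by
      rw [hkV] at h1
      rw [hu]
      linarith
    have hD2 : D ^ 2 ≤ D ^ 3 := pow_le_pow_right₀ hD1 (by norm_num)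
    have hu_up : u ≤ t ^ 2 * D ^ 3 := by
      have : 0 ≤ (t * D) ^ 3 := by positivity
      have : t ^ 2 * k ≤ t ^ 2 * D ^ 3 := by gcongr; linarith
      have : 0 ≤ t ^ 2 * D ^ 3 := by positivity
      linarith
    have hu_lo : -(t ^ 2 * D ^ 3) ≤ u := by
      have : 0 ≤ t ^ 2 / 2 * k := by positivity
      have : (t * D) ^ 3 ≤ t ^ 2 * D ^ 3 := by
        rw [mul_pow]
        exact mul_le_mul_of_nonneg_right (pow_le_pow_of_le_one ht0.le ht1 (by norm_num))
          (by positivity)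
      linarith
    have ht2 : t ^ 2 * D ^ 3 ≤ 1 / 4 := by
      have : t ^ 2 ≤ t := by nlinarith
      have : t ^ 2 * D ^ 3 ≤ t * D ^ 3 := by gcongr
      linarith
    have husq : u ^ 2 ≤ t ^ 3 * D ^ 6 := by
      have h2 : u ^ 2 ≤ (t ^ 2 * D ^ 3) ^ 2 := sq_le_sq' hu_lo hu_up
      have h3 : (t ^ 2 * D ^ 3) ^ 2 = t ^ 4 * D ^ 6 := by ring
      have h4 : t ^ 4 ≤ t ^ 3 := pow_le_pow_of_le_one ht0.le ht1 (by norm_num)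
      have h5 : t ^ 4 * D ^ 6 ≤ t ^ 3 * D ^ 6 := by gcongr
      linarith
    have hpos : 0 < 1 + u := by linarith
    have hlog : u - 2 * u ^ 2 ≤ Real.log (1 + u) := by
      have h2 := Real.one_sub_inv_le_log_of_pos hpos
      have h3 : u - 2 * u ^ 2 ≤ 1 - (1 + u)⁻¹ := by
        have : 1 - (1 + u)⁻¹ = u / (1 + u) := by field_simp; ring
        rw [this, le_div_iff₀ hpos]
        nlinarith [sq_nonneg u]
      linarith
    have h6 := Real.log_le_log (by positivity) hI
    rw [Real.log_mul hV.ne' hpos.ne'] at h6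
    have h7 : (t * D) ^ 3 ≤ t ^ 3 * D ^ 6 := by
      rw [mul_pow]; gcongr
    have h8 : 0 ≤ t ^ 3 * D ^ 6 := by positivity
    linarith
  have main : ((a * (∫ x in K, ℓ x ^ 2) + b * (∫ x in B, ℓ x ^ 2)) / V) ≤
      (∫ x in M, ℓ x ^ 2) / V := by
    refine le_of_forall_small (C := 20 * D ^ 6) (t₀ := 1 / (4 * D ^ 3)) (by positivity)
      fun t ht0 ht => ?_
    have h1 := log_integral_exp_combo ha hb hab hK hB hM hKb hBb hMb (hKV ▸ hV) (hBV ▸ hV) hsub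
      (α := fun x => t * ℓ x) (β := fun x => t * ℓ x) (γ := fun x => t * ℓ x)
      (by fun_prop) (by fun_prop) (by fun_prop) (fun x hx y hy => by
        simp only [map_add, map_smul, smul_eq_mul]; linarith)
    have h2 := lower ht0 ht hK hKb hKV hDK hK0
    have h3 := lower ht0 ht hB hBb hBV hDB hB0
    have hD3 : D ≤ D ^ 3 := le_self_pow₀ hD1 (by norm_num)
    have hD6 : D ^ 3 ≤ D ^ 6 := pow_le_pow_right₀ hD1 (by norm_num)
    have htD : t * D ≤ 1 := by
      rw [le_div_iff₀ (by positivity)] at ht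
      nlinarith
    have h4 := (abs_le.1 (integral_exp_second_order hMb hMV hℓ hM0 hDM ht0 htD)).2
    have hMpos := setIntegral_exp_pos (φ := fun x => t * ℓ x) (by fun_prop) hMb (hMV ▸ hV)
    have h5 := Real.log_le_sub_one_of_pos (div_pos hMpos hV)
    rw [Real.log_div hMpos.ne' hV.ne'] at h5
    have h6 : (∫ x in M, Real.exp (t * ℓ x)) / V ≤
        1 + t ^ 2 / 2 * ((∫ x in M, ℓ x ^ 2) / V) + (t * D) ^ 3 := by
      rw [div_le_iff₀ hV]
      have : (1 + t ^ 2 / 2 * ((∫ x in M, ℓ x ^ 2) / V) + (t * D) ^ 3) * V =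
        V + t ^ 2 / 2 * (∫ x in M, ℓ x ^ 2) + (t * D) ^ 3 * V := by field_simp
      rw [this]
      linarith
    have h7 : (t * D) ^ 3 ≤ t ^ 3 * D ^ 6 := by
      rw [mul_pow]; gcongr
    have e1 := mul_le_mul_of_nonneg_left h2 ha.le
    have e2 := mul_le_mul_of_nonneg_left h3 hb.le
    have e3 : a * Real.log V + b * Real.log V = Real.log V := by rw [← add_mul, hab, one_mul]
    have e4 : a * (D ^ 6 * t ^ 3) + b * (D ^ 6 * t ^ 3) = D ^ 6 * t ^ 3 := by
      rw [← add_mul, hab, one_mul]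
    have h9 : t ^ 2 / 2 * ((a * (∫ x in K, ℓ x ^ 2) + b * (∫ x in B, ℓ x ^ 2)) / V) ≤
        t ^ 2 / 2 * ((∫ x in M, ℓ x ^ 2) / V + 20 * D ^ 6 * t) := by
      have e5 : t ^ 2 / 2 * ((a * (∫ x in K, ℓ x ^ 2) + b * (∫ x in B, ℓ x ^ 2)) / V) =
        a * (t ^ 2 / 2 * ((∫ x in K, ℓ x ^ 2) / V)) +
          b * (t ^ 2 / 2 * ((∫ x in B, ℓ x ^ 2) / V)) := by ring
      rw [e5]
      linarith
    exact le_of_mul_le_mul_left h9 (by positivity)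
  exact (div_le_div_iff_of_pos_right hV).1 main

end Expansions

/-! ### Equality in the Brunn–Minkowski inequality with a ball -/

section Equality

variable {n : ℕ}

lemma volume_real_ball_pos (x : EuclideanSpace ℝ (Fin n)) {r : ℝ} (hr : 0 < r) :
    0 < volume.real (ball x r) :=
  ENNReal.toReal_pos (measure_ball_pos _ _ hr).ne' measure_ball_lt_top.ne

lemma volume_real_ball (x : EuclideanSpace ℝ (Fin n)) {r : ℝ} (hr : 0 < r) :
    volume.real (ball x r) = r ^ n * volume.real (ball (0 : EuclideanSpace ℝ (Fin n)) 1) := by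
  simp only [Measure.real]
  rw [Measure.addHaar_ball_of_pos _ _ hr, ENNReal.toReal_mul, ENNReal.toReal_ofReal (by positivity)]
  simp

lemma integral_ball_eq_zero (ℓ : EuclideanSpace ℝ (Fin n) →L[ℝ] ℝ) (r : ℝ) :
    ∫ x in ball 0 r, ℓ x = 0 := by
  rw [← integral_indicator measurableSet_ball]
  have h := integral_neg_eq_self ((ball (0 : EuclideanSpace ℝ (Fin n)) r).indicator ℓ) volume
  have h2 : ∀ x, (ball (0 : EuclideanSpace ℝ (Fin n)) r).indicator ℓ (-x) =
      -(ball (0 : EuclideanSpace ℝ (Fin n)) r).indicator ℓ x := by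
    intro x
    by_cases hx : x ∈ ball (0 : EuclideanSpace ℝ (Fin n)) r
    · rw [indicator_of_mem hx, indicator_of_mem (by simpa using hx), map_neg]
    · rw [indicator_of_notMem hx, indicator_of_notMem (by simpa using hx), neg_zero]
  simp only [h2, integral_neg] at h
  linarith

lemma norm_sq_combo {a b : ℝ} (hab : a + b = 1) (x y : EuclideanSpace ℝ (Fin n)) :
    a * ‖x‖ ^ 2 + b * ‖y‖ ^ 2 = ‖a • x + b • y‖ ^ 2 + a * b * ‖x - y‖ ^ 2 := by
  rw [norm_add_sq_real, norm_sub_sq_real, norm_smul, norm_smul, inner_smul_left, inner_smul_right,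
    mul_pow, mul_pow, Real.norm_eq_abs, Real.norm_eq_abs, sq_abs, sq_abs]
  simp only [conj_trivial]
  have : b = 1 - a := by linarith
  subst this
  ring

/-- The equality case of Brunn–Minkowski against the unit ball, for a centred set. -/
lemma volume_diff_closedBall_centred {K M : Set (EuclideanSpace ℝ (Fin n))} {a b : ℝ}
    (ha : 0 < a) (hb : 0 < b) (hab : a + b = 1)
    (hK : MeasurableSet K) (hM : MeasurableSet M)
    (hKb : Bornology.IsBounded K) (hMb : Bornology.IsBounded M)
    (hKV : volume.real K = volume.real (ball (0 : EuclideanSpace ℝ (Fin n)) 1))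
    (hMV : volume.real M = volume.real (ball (0 : EuclideanSpace ℝ (Fin n)) 1))
    (hsub : ∀ x ∈ K, ∀ y ∈ ball (0 : EuclideanSpace ℝ (Fin n)) 1, a • x + b • y ∈ M)
    (hK0 : ∀ i, ∫ x in K, x i = 0) :
    volume (K \ closedBall 0 1) = 0 := by
  set B := ball (0 : EuclideanSpace ℝ (Fin n)) 1 with hBdef
  have hB : MeasurableSet B := measurableSet_ball
  have hBb : Bornology.IsBounded B := isBounded_ball
  have hV : 0 < volume.real B := volume_real_ball_pos _ one_pos
  set V := volume.real B with hVdef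
  have hB0 : ∀ i, ∫ x in B, x i = 0 := fun i =>
    integral_ball_eq_zero (EuclideanSpace.proj i : EuclideanSpace ℝ (Fin n) →L[ℝ] ℝ) 1
  have hM0 : ∀ i, ∫ x in M, x i = 0 := by
    intro i
    have h1 := integral_combo_le ha hb hab hK hB hM hKb hBb hMb hV hKV rfl hMV hsub
      (α := fun x => x i) (β := fun x => x i) (γ := fun x => x i)
      (by fun_prop) (by fun_prop) (by fun_prop) (fun x _ y _ => by simp)
    have h2 := integral_combo_le ha hb hab hK hB hM hKb hBb hMb hV hKV rfl hMV hsub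
      (α := fun x => -x i) (β := fun x => -x i) (γ := fun x => -x i)
      (by fun_prop) (by fun_prop) (by fun_prop) (fun x _ y _ => by simp)
    simp only [integral_neg] at h2
    rw [hK0, hB0] at h1 h2
    linarith
  -- summing the second-order inequality over the coordinates
  have hsq : a * (∫ x in K, ‖x‖ ^ 2) + b * (∫ x in B, ‖x‖ ^ 2) ≤ ∫ x in M, ‖x‖ ^ 2 := by
    have e : ∀ {S : Set (EuclideanSpace ℝ (Fin n))}, Bornology.IsBounded S →
        ∫ x in S, ‖x‖ ^ 2 = ∑ i, ∫ x in S, x i ^ 2 := by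
      intro S hS
      rw [← integral_finsetSum _ fun i _ => integrableOn_of_isBounded (by fun_prop) hS]
      simp only [EuclideanSpace.real_norm_sq_eq]
    rw [e hKb, e hBb, e hMb, Finset.mul_sum, Finset.mul_sum, ← Finset.sum_add_distrib]
    refine Finset.sum_le_sum fun i _ => ?_
    exact integral_sq_combo_le ha hb hab hK hB hM hKb hBb hMb hV hKV rfl hMV hsub
      (EuclideanSpace.proj i : EuclideanSpace ℝ (Fin n) →L[ℝ] ℝ) (hK0 i) (hB0 i) (hM0 i)
  set p : EuclideanSpace ℝ (Fin n) → ℝ := fun x => max (‖x‖ - 1) 0 with hp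
  have hpc : Continuous p := by fun_prop
  have hp0 : ∀ x, 0 ≤ p x := fun x => le_max_right _ _
  have hpl : ∀ x y, p x - p y ≤ ‖x - y‖ := by
    intro x y
    have h1 := norm_sub_norm_le x y
    have h2 := norm_nonneg (x - y)
    have h3 : ‖y‖ - 1 ≤ p y := le_max_left _ _
    have h4 := hp0 y
    have : p x ≤ ‖x - y‖ + p y := max_le (by linarith) (by linarith)
    linarith
  have hpB : ∫ x in B, p x = 0 := by
    rw [setIntegral_congr_fun (g := fun _ => (0 : ℝ)) hB, integral_zero]
    intro x hx
    have : ‖x‖ < 1 := by simpa [hBdef] using hx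
    simp only [hp]
    exact max_eq_right (by linarith)
  have hpK : ∫ x in K, p x ≤ 0 := by
    refine le_of_forall_small (C := V / (4 * a * b)) one_pos fun t ht _ => ?_
    have h1 := integral_combo_le ha hb hab hK hB hM hKb hBb hMb hV hKV rfl hMV hsub
      (α := fun x => t / a * p x - ‖x‖ ^ 2) (β := fun x => -(t / b * p x) - ‖x‖ ^ 2)
      (γ := fun x => t ^ 2 / (4 * a * b) - ‖x‖ ^ 2)
      (by fun_prop) (by fun_prop) (by fun_prop) (fun x _ y _ => by
        have e := norm_sq_combo hab x y
        have e2 : a * (t / a * p x - ‖x‖ ^ 2) + b * (-(t / b * p y) - ‖y‖ ^ 2) =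
          t * (p x - p y) - (a * ‖x‖ ^ 2 + b * ‖y‖ ^ 2) := by field_simp; ring
        rw [e2, e]
        have e3 := mul_le_mul_of_nonneg_left (hpl x y) ht.le
        -- the slack `a b ‖x - y‖²` of the parallelogram identity absorbs the Lipschitz error
        have e4 : t * ‖x - y‖ - a * b * ‖x - y‖ ^ 2 ≤ t ^ 2 / (4 * a * b) := by
          rw [le_div_iff₀ (by positivity)]
          nlinarith [sq_nonneg (t - 2 * a * b * ‖x - y‖)]
        linarith)
    rw [integral_sub (integrableOn_of_isBounded (by fun_prop) hKb)
        (integrableOn_of_isBounded (by fun_prop) hKb),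
      integral_sub (integrableOn_of_isBounded (by fun_prop) hBb)
        (integrableOn_of_isBounded (by fun_prop) hBb),
      integral_sub (integrableOn_of_isBounded (by fun_prop) hMb)
        (integrableOn_of_isBounded (by fun_prop) hMb), integral_neg, integral_const_mul,
      integral_const_mul, hpB, setIntegral_const, hMV, smul_eq_mul] at h1
    have e1 : a * (t / a * (∫ x in K, p x) - ∫ x in K, ‖x‖ ^ 2) =
      t * (∫ x in K, p x) - a * ∫ x in K, ‖x‖ ^ 2 := by field_simp
    rw [e1] at h1
    have h2 : t * (∫ x in K, p x) ≤ t * (0 + V / (4 * a * b) * t) := by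
      have : t * (0 + V / (4 * a * b) * t) = V * (t ^ 2 / (4 * a * b)) := by ring
      rw [this]
      linarith
    exact le_of_mul_le_mul_left h2 ht
  have hpK0 : ∫ x in K, p x = 0 := le_antisymm hpK (integral_nonneg hp0)
  rw [integral_eq_zero_iff_of_nonneg hp0 (integrableOn_of_isBounded hpc hKb)] at hpK0
  rw [EventuallyEq, ae_restrict_iff' hK, ae_iff] at hpK0
  refine measure_mono_null ?_ hpK0
  rintro x ⟨hxK, hx⟩
  have hx1 : 1 < ‖x‖ := by simpa using hx
  simp only [mem_ofPred_eq, Classical.not_imp]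
  refine ⟨hxK, ?_⟩
  have : ‖x‖ - 1 ≤ p x := le_max_left _ _
  simp only [Pi.zero_apply]
  intro h
  linarith

lemma volume_diff_closedBall_unit {K M : Set (EuclideanSpace ℝ (Fin n))} {a b : ℝ}
    (ha : 0 < a) (hb : 0 < b) (hab : a + b = 1)
    (hK : MeasurableSet K) (hM : MeasurableSet M)
    (hKb : Bornology.IsBounded K) (hMb : Bornology.IsBounded M)
    (hKV : volume.real K = volume.real (ball (0 : EuclideanSpace ℝ (Fin n)) 1))
    (hMV : volume.real M = volume.real (ball (0 : EuclideanSpace ℝ (Fin n)) 1))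
    (hsub : ∀ x ∈ K, ∀ y ∈ ball (0 : EuclideanSpace ℝ (Fin n)) 1, a • x + b • y ∈ M) :
    ∃ c, volume (K \ closedBall c 1) = 0 := by
  have hV : 0 < volume.real (ball (0 : EuclideanSpace ℝ (Fin n)) 1) :=
    volume_real_ball_pos _ one_pos
  set V := volume.real (ball (0 : EuclideanSpace ℝ (Fin n)) 1) with hVdef
  -- the centroid of `K`
  set c : EuclideanSpace ℝ (Fin n) := WithLp.toLp 2 fun i => (∫ x in K, x i) / V with hc
  have hpre : ∀ (S : Set (EuclideanSpace ℝ (Fin n))) (v : EuclideanSpace ℝ (Fin n)),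
      volume ((fun x => x + v) ⁻¹' S) = volume S := fun S v => measure_preimage_add_right _ _ _
  have hbd : ∀ (S : Set (EuclideanSpace ℝ (Fin n))) (v : EuclideanSpace ℝ (Fin n)),
      Bornology.IsBounded S → Bornology.IsBounded ((fun x => x + v) ⁻¹' S) := fun S v hS =>
    (isometry_add_right v).antilipschitz.isBounded_preimage hS
  have key := volume_diff_closedBall_centred (K := (fun x => x + c) ⁻¹' K)
    (M := (fun x => x + a • c) ⁻¹' M) ha hb hab
    (hK.preimage (by fun_prop)) (hM.preimage (by fun_prop)) (hbd _ _ hKb) (hbd _ _ hMb)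
    (by rw [Measure.real, hpre]; exact hKV) (by rw [Measure.real, hpre]; exact hMV)
    (by
      intro x hx y hy
      have := hsub _ hx y hy
      simp only [mem_preimage]
      convert this using 1
      rw [smul_add]
      abel)
    (by
      intro i
      have h := (measurePreserving_add_right (volume : Measure (EuclideanSpace ℝ (Fin n)))
        c).setIntegral_preimage_emb (MeasurableEquiv.addRight c).measurableEmbedding
        (fun x => x i - c i) K
      simp only [PiLp.add_apply, add_sub_cancel_right] at h
      rw [h, integral_sub (integrableOn_of_isBounded (by fun_prop) hKb)
        (integrableOn_of_isBounded (by fun_prop) hKb), setIntegral_const, hKV, smul_eq_mul, hc]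
      simp only
      field_simp
      ring)
  refine ⟨c, ?_⟩
  rw [← hpre _ c]
  convert key using 2
  ext x
  simp [dist_eq_norm]

lemma volume_preimage_smul {S : Set (EuclideanSpace ℝ (Fin n))} {s ρ : ℝ} (hs : 0 < s)
    (hS : volume S = volume (ball (0 : EuclideanSpace ℝ (Fin n)) ρ)) :
    volume ((fun x => s • x) ⁻¹' S) = volume (ball (0 : EuclideanSpace ℝ (Fin n)) (ρ / s)) := by
  have e : ball (0 : EuclideanSpace ℝ (Fin n)) (ρ / s) = (fun x => s • x) ⁻¹' ball 0 ρ := by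
    ext x
    simp [norm_smul, abs_of_pos hs, lt_div_iff₀ hs, mul_comm]
  rw [e, Measure.addHaar_preimage_smul _ hs.ne', Measure.addHaar_preimage_smul _ hs.ne', hS]

lemma isBounded_preimage_smul {S : Set (EuclideanSpace ℝ (Fin n))} {s : ℝ} (hs : 0 < s)
    (hS : Bornology.IsBounded S) : Bornology.IsBounded ((fun x => s • x) ⁻¹' S) := by
  obtain ⟨C, hC⟩ := hS.exists_norm_le
  refine isBounded_iff_forall_norm_le.2 ⟨C / s, fun x hx => ?_⟩
  have := hC _ hx
  rw [norm_smul, Real.norm_eq_abs, abs_of_pos hs] at this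
  rwa [le_div_iff₀ hs, mul_comm]

/-- The equality case of `|A + B_r|^{1/n} ≥ |A|^{1/n} + |B_r|^{1/n}`: up to a null set, `A` is
contained in a ball of the same volume. -/
lemma exists_volume_diff_closedBall {A Ω : Set (EuclideanSpace ℝ (Fin n))} {r R : ℝ}
    (hr : 0 < r) (hrR : r < R) (hA : MeasurableSet A) (hΩ : MeasurableSet Ω)
    (hAb : Bornology.IsBounded A) (hΩb : Bornology.IsBounded Ω)
    (hAV : volume A = volume (ball (0 : EuclideanSpace ℝ (Fin n)) (R - r)))
    (hΩV : volume Ω = volume (ball (0 : EuclideanSpace ℝ (Fin n)) R))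
    (hsub : ∀ x ∈ A, ∀ y ∈ ball (0 : EuclideanSpace ℝ (Fin n)) r, x + y ∈ Ω) :
    ∃ c, volume (A \ closedBall c (R - r)) = 0 := by
  have hs : 0 < R - r := sub_pos.2 hrR
  have hR : 0 < R := hr.trans hrR
  obtain ⟨c, hc⟩ := volume_diff_closedBall_unit (K := (fun x => (R - r) • x) ⁻¹' A)
    (M := (fun x => R • x) ⁻¹' Ω) (a := (R - r) / R) (b := r / R) (by positivity) (by positivity)
    (by field_simp; ring) (hA.preimage (by fun_prop)) (hΩ.preimage (by fun_prop))
    (isBounded_preimage_smul hs hAb) (isBounded_preimage_smul hR hΩb)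
    (by rw [Measure.real, volume_preimage_smul hs hAV, div_self hs.ne']; rfl)
    (by rw [Measure.real, volume_preimage_smul hR hΩV, div_self hR.ne']; rfl)
    (by
      intro x hx y hy
      have hy' : r • y ∈ ball (0 : EuclideanSpace ℝ (Fin n)) r := by
        have : ‖y‖ < 1 := by simpa using hy
        simp only [mem_ball, dist_zero_right, norm_smul, Real.norm_eq_abs, abs_of_pos hr]
        nlinarith
      have := hsub _ hx _ hy'
      simp only [mem_preimage]
      convert this using 1
      rw [smul_add, smul_smul, smul_smul, mul_div_cancel₀ _ hR.ne', mul_div_cancel₀ _ hR.ne'])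
  refine ⟨(R - r) • c, ?_⟩
  have e : (fun x => (R - r) • x) ⁻¹' (A \ closedBall ((R - r) • c) (R - r)) =
      ((fun x => (R - r) • x) ⁻¹' A) \ closedBall c 1 := by
    ext x
    simp [dist_eq_norm, ← smul_sub, norm_smul, abs_of_pos hs, hs]
  rw [← e, Measure.addHaar_preimage_smul _ hs.ne'] at hc
  refine (mul_eq_zero.1 hc).resolve_left ?_
  exact (ENNReal.ofReal_pos.2 (by positivity)).ne'

/-- Brunn–Minkowski against a ball, with volumes expressed through volume radii. -/
lemma volume_le_volume_ball_sub (hn : n ≠ 0) {A Ω : Set (EuclideanSpace ℝ (Fin n))} {r R : ℝ}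
    (hr : 0 < r) (hR : 0 < R) (hA : MeasurableSet A) (hΩ : MeasurableSet Ω)
    (hΩV : volume Ω = volume (ball (0 : EuclideanSpace ℝ (Fin n)) R))
    (hsub : ∀ x ∈ A, ∀ y ∈ ball (0 : EuclideanSpace ℝ (Fin n)) r, x + y ∈ Ω) :
    volume A ≤ volume (ball (0 : EuclideanSpace ℝ (Fin n)) (R - r)) := by
  by_cases hA0 : volume A = 0
  · simp [hA0]
  have hAΩ : A ⊆ Ω := fun x hx => by
    simpa using hsub x hx 0 (mem_ball_self hr)
  have hAfin : volume A ≠ ⊤ := by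
    refine ((measure_mono hAΩ).trans_lt ?_).ne
    rw [hΩV]
    exact measure_ball_lt_top
  have hApos : 0 < volume.real A := ENNReal.toReal_pos hA0 hAfin
  set κ := volume.real (ball (0 : EuclideanSpace ℝ (Fin n)) 1) with hκ
  have hκ0 : 0 < κ := volume_real_ball_pos _ one_pos
  -- the volume radius of `A`
  set s := (volume.real A / κ) ^ ((n : ℝ)⁻¹) with hs_def
  have hs : 0 < s := by positivity
  have hAV : volume A = volume (ball (0 : EuclideanSpace ℝ (Fin n)) s) := by
    rw [← ENNReal.toReal_eq_toReal_iff' hAfin measure_ball_lt_top.ne]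
    change volume.real A = volume.real _
    rw [volume_real_ball _ hs, hs_def, Real.rpow_inv_natCast_pow (by positivity) hn]
    exact (div_mul_cancel₀ _ hκ0.ne').symm
  have hsr : 0 < s + r := by positivity
  have key := volume_rpow_mul_le (K := (fun x => s • x) ⁻¹' A)
    (B := ball (0 : EuclideanSpace ℝ (Fin n)) 1)
    (M := (fun x => (s + r) • x) ⁻¹' Ω) (a := s / (s + r)) (b := r / (s + r)) (by positivity)
    (by positivity) (by field_simp) (hA.preimage (by fun_prop)) measurableSet_ball
    (hΩ.preimage (by fun_prop))
    (by
      intro x hx y hy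
      have hy' : r • y ∈ ball (0 : EuclideanSpace ℝ (Fin n)) r := by
        have : ‖y‖ < 1 := by simpa using hy
        simp only [mem_ball, dist_zero_right, norm_smul, Real.norm_eq_abs, abs_of_pos hr]
        nlinarith
      have := hsub _ hx _ hy'
      simp only [mem_preimage]
      convert this using 1
      rw [smul_add, smul_smul, smul_smul, mul_div_cancel₀ _ hsr.ne', mul_div_cancel₀ _ hsr.ne'])
  rw [volume_preimage_smul hs hAV, volume_preimage_smul hsr hΩV, div_self hs.ne',
    ← ENNReal.rpow_add_of_nonneg _ _ (by positivity) (by positivity), ← add_div,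
    div_self hsr.ne', ENNReal.rpow_one] at key
  have key2 : volume.real (ball (0 : EuclideanSpace ℝ (Fin n)) 1) ≤
      volume.real (ball (0 : EuclideanSpace ℝ (Fin n)) (R / (s + r))) :=
    ENNReal.toReal_mono measure_ball_lt_top.ne key
  rw [volume_real_ball _ (div_pos hR hsr), le_mul_iff_one_le_left hκ0,
    one_le_pow_iff_of_nonneg (by positivity) hn, one_le_div hsr] at key2
  rw [hAV]
  exact measure_mono (ball_subset_ball (by linarith))

end Equality

/-! ### Inner parallel sets and the maximum of `r |Ω_r|` -/

section InnerParallel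

variable {n : ℕ}

/-- The closed inner parallel set `{x ∈ Ω : dist(x, ∂Ω) ≥ r}`. Unlike `innerParallel`, its volume
is upper semicontinuous in `r`, which is what the existence of a maximizing radius requires. -/
def closedInnerParallel (Ω : Set (EuclideanSpace ℝ (Fin n))) (r : ℝ) :
    Set (EuclideanSpace ℝ (Fin n)) :=
  {x ∈ Ω | r ≤ infDist x (frontier Ω)}

/-- The set of values `r |Ω_r|` whose supremum is `1 / Λ_∞(Ω)`. -/
def parallelValues (Ω : Set (EuclideanSpace ℝ (Fin n))) : Set ℝ :=
  (fun r => r * (volume (innerParallel Ω r)).toReal) '' Icc 0 (inradius Ω)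

/-- The supremum of `r |B_{R - r}|` over `0 ≤ r ≤ R`, which is `1 / Λ_∞` of a ball of
radius `R`. -/
def ballSup (n : ℕ) (R : ℝ) : ℝ :=
  sSup ((fun r => r * volume.real (ball (0 : EuclideanSpace ℝ (Fin n)) (R - r))) '' Icc 0 R)

lemma innerParallel_subset_closed (Ω : Set (EuclideanSpace ℝ (Fin n))) (r : ℝ) :
    innerParallel Ω r ⊆ closedInnerParallel Ω r := fun _ hx => ⟨hx.1, hx.2.le⟩

lemma measurableSet_closedInnerParallel {Ω : Set (EuclideanSpace ℝ (Fin n))} (hΩ : IsOpen Ω)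
    (r : ℝ) : MeasurableSet (closedInnerParallel Ω r) :=
  hΩ.measurableSet.inter (isClosed_le continuous_const (continuous_infDist_pt _)).measurableSet

lemma isOpen_innerParallel {Ω : Set (EuclideanSpace ℝ (Fin n))} (hΩ : IsOpen Ω) (r : ℝ) :
    IsOpen (innerParallel Ω r) :=
  hΩ.inter (isOpen_lt continuous_const (continuous_infDist_pt _))

/-- `Ω_r + B_r ⊆ Ω`, since a ball about a point of `Ω` that misses `∂Ω` lies in `Ω`. -/
lemma add_mem_of_mem_closedInnerParallel {Ω : Set (EuclideanSpace ℝ (Fin n))} (hΩ : IsOpen Ω)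
    {r : ℝ} (hr : 0 < r) {x : EuclideanSpace ℝ (Fin n)} (hx : x ∈ closedInnerParallel Ω r)
    {y : EuclideanSpace ℝ (Fin n)} (hy : y ∈ ball (0 : EuclideanSpace ℝ (Fin n)) r) :
    x + y ∈ Ω := by
  have hsub : ball x r ⊆ Ω := by
    refine ((convex_ball x r).isPreconnected).subset_left_of_subset_union hΩ
      isClosed_closure.isOpen_compl
      (disjoint_compl_right.mono_left subset_closure) ?_ ⟨x, mem_ball_self hr, hx.1⟩
    intro z hz
    by_contra hcon
    simp only [mem_union, mem_compl_iff, not_or, not_not] at hcon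
    have hzf : z ∈ frontier Ω := ⟨hcon.2, fun h => hcon.1 (interior_subset h)⟩
    have h1 := hx.2.trans (infDist_le_dist_of_mem hzf)
    rw [mem_ball, dist_comm] at hz
    linarith
  exact hsub (by simpa [dist_eq_norm] using hy)

lemma volume_closedInnerParallel_le (hn : n ≠ 0) {Ω : Set (EuclideanSpace ℝ (Fin n))}
    (hΩ : IsOpen Ω) {r R : ℝ} (hr : 0 < r) (hR : 0 < R)
    (hΩV : volume Ω = volume (ball (0 : EuclideanSpace ℝ (Fin n)) R)) :
    volume.real (closedInnerParallel Ω r) ≤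
      volume.real (ball (0 : EuclideanSpace ℝ (Fin n)) (R - r)) :=
  ENNReal.toReal_mono measure_ball_lt_top.ne
    (volume_le_volume_ball_sub hn hr hR (measurableSet_closedInnerParallel hΩ r) hΩ.measurableSet
      hΩV fun _ hx _ hy => add_mem_of_mem_closedInnerParallel hΩ hr hx hy)

lemma bddAbove_ballSup (R : ℝ) :
    BddAbove ((fun r => r * volume.real (ball (0 : EuclideanSpace ℝ (Fin n)) (R - r))) ''
      Icc 0 R) := by
  refine ⟨R * volume.real (ball (0 : EuclideanSpace ℝ (Fin n)) R), ?_⟩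
  rintro _ ⟨r, hr, rfl⟩
  exact mul_le_mul hr.2 (measureReal_mono (ball_subset_ball (by linarith [hr.1]))
    measure_ball_lt_top.ne) measureReal_nonneg (hr.1.trans hr.2)

lemma mul_volume_ball_le_ballSup {r R : ℝ} (hr : 0 ≤ r) (hR : 0 < R) :
    r * volume.real (ball (0 : EuclideanSpace ℝ (Fin n)) (R - r)) ≤ ballSup n R := by
  rcases le_or_gt r R with h | h
  · exact le_csSup (bddAbove_ballSup R) ⟨r, ⟨hr, h⟩, rfl⟩
  · rw [ball_eq_empty.2 (by linarith), measureReal_empty, mul_zero]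
    exact le_csSup (bddAbove_ballSup R) ⟨0, ⟨le_rfl, hR.le⟩, by simp⟩

lemma mul_volume_closedInnerParallel_le (hn : n ≠ 0) {Ω : Set (EuclideanSpace ℝ (Fin n))}
    (hΩ : IsOpen Ω) {r R : ℝ} (hr : 0 ≤ r) (hR : 0 < R)
    (hΩV : volume Ω = volume (ball (0 : EuclideanSpace ℝ (Fin n)) R)) :
    r * volume.real (closedInnerParallel Ω r) ≤
      r * volume.real (ball (0 : EuclideanSpace ℝ (Fin n)) (R - r)) := by
  rcases hr.eq_or_lt with rfl | hr
  · simp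
  · exact mul_le_mul_of_nonneg_left (volume_closedInnerParallel_le hn hΩ hr hR hΩV) hr.le

lemma volume_real_innerParallel_le {Ω : Set (EuclideanSpace ℝ (Fin n))}
    (hΩb : Bornology.IsBounded Ω) {r s : ℝ} (h : s ≤ r) :
    (volume (innerParallel Ω r)).toReal ≤ volume.real (closedInnerParallel Ω s) :=
  measureReal_mono (fun _ hx => ⟨hx.1, h.trans hx.2.le⟩)
    (hΩb.subset fun _ hx => hx.1).measure_lt_top.ne

/-- Every value `r |Ω_r|` is at most the corresponding supremum for the ball of equal volume. -/
lemma le_ballSup_of_mem_parallelValues (hn : n ≠ 0) {Ω : Set (EuclideanSpace ℝ (Fin n))}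
    (hΩ : IsOpen Ω) (hΩb : Bornology.IsBounded Ω) {R : ℝ} (hR : 0 < R)
    (hΩV : volume Ω = volume (ball (0 : EuclideanSpace ℝ (Fin n)) R)) :
    ∀ v ∈ parallelValues Ω, v ≤ ballSup n R := by
  rintro _ ⟨r, hr, rfl⟩
  exact (mul_le_mul_of_nonneg_left (volume_real_innerParallel_le hΩb le_rfl) hr.1).trans
    ((mul_volume_closedInnerParallel_le hn hΩ hr.1 hR hΩV).trans
      (mul_volume_ball_le_ballSup hr.1 hR))

lemma bddAbove_infDist_frontier {Ω : Set (EuclideanSpace ℝ (Fin n))}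
    (hΩb : Bornology.IsBounded Ω) : BddAbove ((fun x => infDist x (frontier Ω)) '' Ω) := by
  rcases (frontier Ω).eq_empty_or_nonempty with h | ⟨z, hz⟩
  · refine ⟨0, ?_⟩
    rintro _ ⟨x, -, rfl⟩
    simp [h]
  · refine ⟨diam (closure Ω), ?_⟩
    rintro _ ⟨x, hx, rfl⟩
    exact (infDist_le_dist_of_mem hz).trans
      (dist_le_diam_of_mem hΩb.closure (subset_closure hx) hz.1)

lemma infDist_le_inradius {Ω : Set (EuclideanSpace ℝ (Fin n))}
    (hΩb : Bornology.IsBounded Ω) {x : EuclideanSpace ℝ (Fin n)} (hx : x ∈ Ω) :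
    infDist x (frontier Ω) ≤ inradius Ω :=
  le_csSup (bddAbove_infDist_frontier hΩb) ⟨x, hx, rfl⟩

lemma sSup_parallelValues_ball (hn : n ≠ 0) (x : EuclideanSpace ℝ (Fin n)) {R : ℝ} (hR : 0 < R) :
    sSup (parallelValues (ball x R)) = ballSup n R := by
  have : Nonempty (Fin n) := Fin.pos_iff_nonempty.1 (Nat.pos_of_ne_zero hn)
  have hV : volume (ball x R) = volume (ball (0 : EuclideanSpace ℝ (Fin n)) R) :=
    Measure.addHaar_ball_center _ _ _
  have hle := le_ballSup_of_mem_parallelValues hn isOpen_ball isBounded_ball hR hV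
  have hsph : (sphere x R).Nonempty := NormedSpace.sphere_nonempty.2 hR.le
  have hrad : R ≤ inradius (ball x R) := by
    refine le_trans ?_ (infDist_le_inradius isBounded_ball (mem_ball_self hR))
    rw [frontier_ball x hR.ne', le_infDist hsph]
    intro y hy
    rw [dist_comm, mem_sphere.1 hy]
  refine le_antisymm (csSup_le ⟨_, 0, ⟨le_rfl, hR.le.trans hrad⟩, rfl⟩ hle) ?_
  refine csSup_le ⟨_, 0, ⟨le_rfl, hR.le⟩, rfl⟩ ?_
  rintro _ ⟨r, hr, rfl⟩
  refine le_trans (mul_le_mul_of_nonneg_left ?_ hr.1)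
    (le_csSup ⟨_, hle⟩ ⟨r, ⟨hr.1, hr.2.trans hrad⟩, rfl⟩)
  rw [Measure.real, ← Measure.addHaar_ball_center volume x (R - r)]
  refine ENNReal.toReal_mono
    (isBounded_ball.subset fun _ hx => hx.1 : Bornology.IsBounded _).measure_lt_top.ne
    (measure_mono fun y hy => ⟨ball_subset_ball (by linarith [hr.1]) hy, ?_⟩)
  rw [mem_ball] at hy
  refine (lt_of_lt_of_le (by linarith : r < R - dist y x) ?_)
  rw [frontier_ball x hR.ne', le_infDist hsph]
  intro z hz
  have h1 := dist_triangle z y x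
  rw [mem_sphere.1 hz, dist_comm z y] at h1
  linarith

/-- Some value `r |Ω_r|` is positive, so the reciprocal defining `LamInf Ω` is not junk. -/
lemma exists_pos_mem_parallelValues (hn : n ≠ 0) {Ω : Set (EuclideanSpace ℝ (Fin n))}
    (hΩ : IsOpen Ω) (hΩb : Bornology.IsBounded Ω) (hne : Ω.Nonempty) :
    ∃ v ∈ parallelValues Ω, 0 < v := by
  have : Nonempty (Fin n) := Fin.pos_iff_nonempty.1 (Nat.pos_of_ne_zero hn)
  obtain ⟨x, hx⟩ := hne
  obtain ⟨ε, hε, hsub⟩ := isOpen_iff.1 hΩ x hx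
  have hfr : (frontier Ω).Nonempty := nonempty_frontier_iff.2
    ⟨⟨x, hx⟩, fun h => NormedSpace.unbounded_univ ℝ (EuclideanSpace ℝ (Fin n)) (h ▸ hΩb)⟩
  have hinf : ε ≤ infDist x (frontier Ω) := by
    rw [le_infDist hfr]
    intro y hy
    by_contra hcon
    rw [hΩ.frontier_eq] at hy
    exact hy.2 (hsub (by rw [mem_ball, dist_comm]; linarith))
  refine ⟨_, ⟨ε / 2, ⟨by linarith, ?_⟩, rfl⟩, ?_⟩
  · linarith [infDist_le_inradius hΩb hx]
  · refine mul_pos (by linarith) (ENNReal.toReal_pos ?_ ?_)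
    · exact ((isOpen_innerParallel hΩ _).measure_pos _
        ⟨x, hx, by linarith⟩).ne'
    · exact (hΩb.subset fun _ hx => hx.1 : Bornology.IsBounded _).measure_lt_top.ne

/-- Some closed inner parallel set reaches the supremum of `r |Ω_r|`: a subsequence of a maximizing
sequence of radii converges, and the volume is upper semicontinuous. -/
lemma exists_sSup_parallelValues_le {Ω : Set (EuclideanSpace ℝ (Fin n))}
    (hΩ : IsOpen Ω) (hΩb : Bornology.IsBounded Ω) (hne : (parallelValues Ω).Nonempty)
    (hbdd : BddAbove (parallelValues Ω)) :
    ∃ r, 0 ≤ r ∧ sSup (parallelValues Ω) ≤ r * volume.real (closedInnerParallel Ω r) := by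
  obtain ⟨u, -, hu, hmem⟩ := exists_seq_tendsto_sSup hne hbdd
  choose r hr hru using hmem
  obtain ⟨r₀, hr₀, φ, hφ, hlim⟩ := isCompact_Icc.tendsto_subseq hr
  refine ⟨r₀, hr₀.1, ?_⟩
  have hstep : ∀ j : ℕ, sSup (parallelValues Ω) ≤
      r₀ * volume.real (closedInnerParallel Ω (r₀ - 1 / ((j : ℝ) + 1))) := by
    intro j
    have hpos : (0 : ℝ) < 1 / ((j : ℝ) + 1) := by positivity
    refine le_of_tendsto_of_tendsto (hu.comp hφ.tendsto_atTop) (hlim.mul_const _) ?_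
    filter_upwards [hlim.eventually (lt_mem_nhds (sub_lt_self r₀ hpos))] with k hk
    simp only [Function.comp_apply] at hk ⊢
    rw [← hru]
    exact mul_le_mul_of_nonneg_left (volume_real_innerParallel_le hΩb hk.le) (hr _).1
  have hInter : ⋂ j : ℕ, closedInnerParallel Ω (r₀ - 1 / ((j : ℝ) + 1)) =
      closedInnerParallel Ω r₀ := by
    refine Subset.antisymm (fun x hx => ?_) (subset_iInter fun j x hx => ⟨hx.1, ?_⟩)
    · rw [mem_iInter] at hx
      refine ⟨(hx 0).1, ?_⟩
      have h1 : Tendsto (fun j : ℕ => r₀ - 1 / ((j : ℝ) + 1)) atTop (nhds (r₀ - 0)) :=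
        tendsto_const_nhds.sub tendsto_one_div_add_atTop_nhds_zero_nat
      rw [sub_zero] at h1
      exact le_of_tendsto' h1 fun j => (hx j).2
    · have hpos : (0 : ℝ) < 1 / ((j : ℝ) + 1) := by positivity
      linarith [hx.2]
  have hfin : ∀ s, volume (closedInnerParallel Ω s) ≠ ⊤ := fun s =>
    (hΩb.subset fun _ hx => hx.1 : Bornology.IsBounded _).measure_lt_top.ne
  have hlim2 := tendsto_measure_iInter_atTop (μ := volume)
    (s := fun j : ℕ => closedInnerParallel Ω (r₀ - 1 / ((j : ℝ) + 1)))
    (fun j => (measurableSet_closedInnerParallel hΩ _).nullMeasurableSet)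
    (fun i j hij x hx => ⟨hx.1, le_trans (by
      have := Nat.one_div_le_one_div (α := ℝ) hij
      linarith) hx.2⟩) ⟨0, hfin _⟩
  rw [hInter] at hlim2
  exact ge_of_tendsto' (((ENNReal.tendsto_toReal (hfin r₀)).comp hlim2).const_mul r₀) hstep

/-- If `r |Ω_r|` reaches the supremum belonging to the ball of equal volume, `Ω` is a ball. -/
lemma exists_eq_ball_of_sSup_eq (hn : n ≠ 0) {Ω : Set (EuclideanSpace ℝ (Fin n))}
    (hΩ : IsOpen Ω) (hΩb : Bornology.IsBounded Ω) (hne : Ω.Nonempty) {R : ℝ} (hR : 0 < R)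
    (hΩV : volume Ω = volume (ball (0 : EuclideanSpace ℝ (Fin n)) R))
    (hS : sSup (parallelValues Ω) = ballSup n R) :
    ∃ c, Ω = ball c R := by
  have : Nonempty (Fin n) := Fin.pos_iff_nonempty.1 (Nat.pos_of_ne_zero hn)
  have hbdd : BddAbove (parallelValues Ω) :=
    ⟨_, le_ballSup_of_mem_parallelValues hn hΩ hΩb hR hΩV⟩
  obtain ⟨v, hv, hv0⟩ := exists_pos_mem_parallelValues hn hΩ hΩb hne
  have hSpos : 0 < ballSup n R := hS ▸ hv0.trans_le (le_csSup hbdd hv)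
  obtain ⟨r, hr0, hr⟩ := exists_sSup_parallelValues_le hΩ hΩb ⟨v, hv⟩ hbdd
  rw [hS] at hr
  set A := closedInnerParallel Ω r with hAdef
  have hAm : MeasurableSet A := measurableSet_closedInnerParallel hΩ r
  have hAb : Bornology.IsBounded A := hΩb.subset fun _ hx => hx.1
  have hrpos : 0 < r := by
    rcases hr0.eq_or_lt with h | h
    · rw [← h, zero_mul] at hr
      linarith
    · exact h
  have hle := mul_volume_closedInnerParallel_le hn hΩ hr0 hR hΩV
  have hle2 := mul_volume_ball_le_ballSup (n := n) hr0 hR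
  have hrR : r < R := by
    by_contra hcon
    rw [ball_eq_empty.2 (by linarith), measureReal_empty, mul_zero] at hle
    linarith
  have hs : 0 < R - r := sub_pos.2 hrR
  have hAV : volume A = volume (ball (0 : EuclideanSpace ℝ (Fin n)) (R - r)) := by
    rw [← ENNReal.toReal_eq_toReal_iff' hAb.measure_lt_top.ne measure_ball_lt_top.ne]
    exact mul_left_cancel₀ hrpos.ne' (le_antisymm hle (hle2.trans hr))
  have hsub : ∀ x ∈ A, ∀ y ∈ ball (0 : EuclideanSpace ℝ (Fin n)) r, x + y ∈ Ω :=
    fun _ hx _ hy => add_mem_of_mem_closedInnerParallel hΩ hrpos hx hy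
  obtain ⟨c, hc⟩ := exists_volume_diff_closedBall hrpos hrR hAm hΩ.measurableSet hAb hΩb hAV hΩV
    hsub
  have hc' : volume (closedBall c (R - r) \ A) = 0 := by
    have h1 : volume (closedBall c (R - r)) = volume A := by
      rw [hAV, Measure.addHaar_closedBall_eq_addHaar_ball, Measure.addHaar_ball_center]
    have h2 := measure_sdiff_add_inter (μ := volume) (closedBall c (R - r)) hAm
    have h3 := measure_sdiff_add_inter (μ := volume) A
      (measurableSet_closedBall (x := c) (ε := R - r))
    rw [hc, zero_add, inter_comm] at h3
    rw [h3, h1] at h2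
    have h4 : volume (closedBall c (R - r) \ A) + volume A = 0 + volume A := by rw [h2, zero_add]
    exact (ENNReal.add_left_inj hAb.measure_lt_top.ne).1 h4
  -- `A` is dense in the ball of radius `R - r`, so `A + B_r` contains the ball of radius `R`
  have hballsub : ball c R ⊆ Ω := by
    intro z hz
    have hzR : ‖z - c‖ < R := by rwa [mem_ball, dist_eq_norm] at hz
    have hw : c + ((R - r) / R) • (z - c) ∈ ball z r ∩ ball c (R - r) := by
      constructor
      · have : c + ((R - r) / R) • (z - c) - z = -(r / R) • (z - c) := by
          rw [sub_div, div_self hR.ne']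
          module
        rw [mem_ball, dist_eq_norm, this, norm_smul, norm_neg, Real.norm_eq_abs,
          abs_of_pos (by positivity), div_mul_eq_mul_div, div_lt_iff₀ hR]
        exact mul_lt_mul_of_pos_left hzR hrpos
      · rw [mem_ball, dist_eq_norm, add_sub_cancel_left, norm_smul, Real.norm_eq_abs,
          abs_of_pos (by positivity), div_mul_eq_mul_div, div_lt_iff₀ hR]
        exact mul_lt_mul_of_pos_left hzR hs
    have hpos : 0 < volume (ball z r ∩ ball c (R - r)) :=
      (isOpen_ball.inter isOpen_ball).measure_pos _ ⟨_, hw⟩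
    obtain ⟨y, hyA, hyz⟩ : ∃ y ∈ A, y ∈ ball z r := by
      by_contra! hcon
      refine hpos.ne' (measure_mono_null (fun y hy => ?_) hc')
      exact ⟨ball_subset_closedBall hy.2, fun hyA => hcon y hyA hy.1⟩
    have := hsub y hyA (z - y) (by rwa [mem_ball_zero_iff, ← dist_eq_norm, dist_comm])
    rwa [add_sub_cancel] at this
  refine ⟨c, Subset.antisymm ?_ hballsub⟩
  have hnull : volume (Ω \ closedBall c R) = 0 := by
    refine measure_mono_null (sdiff_subset_sdiff_right ball_subset_closedBall) ?_
    rw [measure_sdiff hballsub measurableSet_ball.nullMeasurableSet measure_ball_lt_top.ne, hΩV,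
      Measure.addHaar_ball_center volume c R, tsub_self]
  have hempty := (hΩ.sdiff isClosed_closedBall).eq_empty_of_measure_zero hnull
  rw [← interior_closedBall c hR.ne']
  exact interior_maximal (sdiff_eq_empty.1 hempty) hΩ

end InnerParallel

theorem stmt_8 (n : ℕ) (hn : 2 ≤ n) (Ω : Set (EuclideanSpace ℝ (Fin n)))
    (hΩo : IsOpen Ω) (hΩb : Bornology.IsBounded Ω) (hΩc : Convex ℝ Ω)
    (hΩne : Ω.Nonempty) (Ωstar : Set (EuclideanSpace ℝ (Fin n)))
    (hball : ∃ (x : EuclideanSpace ℝ (Fin n)) (ρ : ℝ) (_ : 0 < ρ),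
      Ωstar = Metric.ball x ρ)
    (hvol : volume Ωstar = volume Ω) :
    LamInf Ω ≥ LamInf Ωstar ∧
    (LamInf Ω = LamInf Ωstar ↔
      ∃ (x : EuclideanSpace ℝ (Fin n)) (ρ : ℝ), Ω = Metric.ball x ρ) := by
  obtain ⟨x, R, hR, rfl⟩ := hball
  have hn0 : n ≠ 0 := by omega
  have hΩV : volume Ω = volume (ball (0 : EuclideanSpace ℝ (Fin n)) R) := by
    rw [← hvol, Measure.addHaar_ball_center]
  have hstar : LamInf (ball x R) = (ballSup n R)⁻¹ := by
    rw [← sSup_parallelValues_ball hn0 x hR]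
    rfl
  have hΛ : LamInf Ω = (sSup (parallelValues Ω))⁻¹ := rfl
  have hle := le_ballSup_of_mem_parallelValues hn0 hΩo hΩb hR hΩV
  obtain ⟨v, hv, hv0⟩ := exists_pos_mem_parallelValues hn0 hΩo hΩb hΩne
  have hpos : 0 < sSup (parallelValues Ω) := hv0.trans_le (le_csSup ⟨_, hle⟩ hv)
  rw [hΛ, hstar]
  refine ⟨inv_anti₀ hpos (csSup_le ⟨v, hv⟩ hle), fun h => ?_, ?_⟩
  · obtain ⟨c, hc⟩ := exists_eq_ball_of_sSup_eq hn0 hΩo hΩb hΩne hR hΩV (inv_injective h)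
    exact ⟨c, R, hc⟩
  · rintro ⟨c, ρ, rfl⟩
    have hρ : 0 < ρ := nonempty_ball.1 hΩne
    have hρR : ρ = R := by
      have h1 := congrArg ENNReal.toReal hΩV
      change volume.real _ = volume.real _ at h1
      rw [volume_real_ball _ hρ, volume_real_ball _ hR] at h1
      exact (pow_left_inj₀ hρ.le hR.le hn0).1
        (mul_right_cancel₀ (volume_real_ball_pos _ one_pos).ne' h1)
    rw [hρR, sSup_parallelValues_ball hn0 c hR]
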